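/- Cleaning lemma for X-type logicals of the deformed code: with the deformed code construction, for every x' ∈ 𝔽₂^{n+|E|} with H'_Z x' = 0 there exists c ∈ 𝔽₂^V such that the vector x' + Σ_{v : c(v)=1} a_v has zero E-component, its 𝔽₂^n-component x satisfies H_Z x = 0, and x' lies in the row space of H'_X if and only if x lies in the sum of the row space of H_X and the span of ℓ. In particular, every X-type logical operator of the deformed code is equivalent, modulo deformed X-stabilizers, to an operator supported only on the original qubits whose restriction is a nontrivial X-type logical operator of the original code. -/

import Mathlib

open Finset

variable {V : Type*} [Fintype V] [DecidableEq V]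

/-- The boundary map `∂ : 𝔽₂^E → 𝔽₂^V` of a simple graph, sending the indicator of an edge
to the sum of the indicators of its endpoints. -/
def bd (G : SimpleGraph V) [Fintype G.edgeSet] :
    (G.edgeSet → ZMod 2) →ₗ[ZMod 2] (V → ZMod 2) where
  toFun x := fun v => ∑ e : G.edgeSet, if v ∈ (e : Sym2 V) then x e else 0
  map_add' x y := by
    funext v
    simp only [Pi.add_apply]
    rw [← Finset.sum_add_distrib]
    exact Finset.sum_congr rfl fun e _ => by split <;> simp
  map_smul' r x := by
    funext v
    simp only [Pi.smul_apply, smul_eq_mul, RingHom.id_apply]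
    rw [Finset.mul_sum]
    exact Finset.sum_congr rfl fun e _ => by split <;> simp

/-- The coboundary map `δ : 𝔽₂^V → 𝔽₂^E` of a simple graph (the transpose of `∂`):
`(δ c) e = c u + c v` where `u, v` are the endpoints of `e`. -/
def cobd (G : SimpleGraph V) [Fintype G.edgeSet] :
    (V → ZMod 2) →ₗ[ZMod 2] (G.edgeSet → ZMod 2) where
  toFun c := fun e => ∑ v : V, if v ∈ (e : Sym2 V) then c v else 0
  map_add' x y := by
    funext e
    simp only [Pi.add_apply]
    rw [← Finset.sum_add_distrib]
    exact Finset.sum_congr rfl fun v _ => by split <;> simp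
  map_smul' r x := by
    funext e
    simp only [Pi.smul_apply, smul_eq_mul, RingHom.id_apply]
    rw [Finset.mul_sum]
    exact Finset.sum_congr rfl fun v _ => by split <;> simp

/-- The Gauss's law row `a_v = (1_v, δ 1_v) ∈ 𝔽₂^n × 𝔽₂^E` of the deformed `X`-check
matrix, for a vertex `v` of the graph `G` on the support of the logical `ℓ`. -/
def gaussRow {n : ℕ} {ℓ : Fin n → ZMod 2} (G : SimpleGraph {i : Fin n // ℓ i = 1})
    [Fintype G.edgeSet] (v : {i : Fin n // ℓ i = 1}) : (Fin n ⊕ G.edgeSet) → ZMod 2 :=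
  Sum.elim (fun i => if i = v.1 then 1 else 0) (cobd G (fun w => if w = v then 1 else 0))

/-- The deformed `X`-check matrix `H'_X`: the rows of `H_X` padded with zeros on the edge
coordinates, together with the Gauss's law rows `a_v` for the vertices of `G`. -/
def deformedHX {n : ℕ} {rX : Type*} (HX : Matrix rX (Fin n) (ZMod 2))
    {ℓ : Fin n → ZMod 2} (G : SimpleGraph {i : Fin n // ℓ i = 1}) [Fintype G.edgeSet] :
    Matrix (rX ⊕ {i : Fin n // ℓ i = 1}) (Fin n ⊕ G.edgeSet) (ZMod 2) :=
  Matrix.of (Sum.elim (fun j => Sum.elim (fun i => HX j i) 0) (fun v => gaussRow G v))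

/-- The deformed `Z`-check matrix `H'_Z`: the rows `(z, γ_z)` for the rows `z` of `H_Z`,
together with the cycle rows `(0, p)` for the rows `p` of the cycle-basis matrix `N`. -/
def deformedHZ {n : ℕ} {rZ rN : Type*} (HZ : Matrix rZ (Fin n) (ZMod 2))
    {ℓ : Fin n → ZMod 2} (G : SimpleGraph {i : Fin n // ℓ i = 1}) [Fintype G.edgeSet]
    (γ : rZ → G.edgeSet → ZMod 2) (N : rN → G.edgeSet → ZMod 2) :
    Matrix (rZ ⊕ rN) (Fin n ⊕ G.edgeSet) (ZMod 2) :=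
  Matrix.of (Sum.elim (fun z => Sum.elim (fun i => HZ z i) (γ z)) (fun p => Sum.elim 0 (N p)))

theorem bd_cobd_adj (G : SimpleGraph V) [Fintype G.edgeSet] (y : G.edgeSet → ZMod 2)
    (c : V → ZMod 2) : ∑ v, bd G y v * c v = ∑ e, y e * cobd G c e := by
  simp only [bd, cobd, LinearMap.coe_mk, AddHom.coe_mk, Finset.sum_mul, Finset.mul_sum]
  rw [Finset.sum_comm]
  refine Finset.sum_congr rfl fun e _ => Finset.sum_congr rfl fun v _ => ?_
  split <;> simp

theorem exists_cobd (G : SimpleGraph V) [Fintype G.edgeSet] (y : G.edgeSet → ZMod 2)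
    (hy : ∀ p, bd G p = 0 → ∑ e, p e * y e = 0) : ∃ c, cobd G c = y := by
  classical
  let f : Module.Dual (ZMod 2) (G.edgeSet → ZMod 2) :=
    Fintype.linearCombination (ZMod 2) y
  have hf : ∀ p, f p = ∑ e, p e * y e := fun p => by
    simp [f, Fintype.linearCombination_apply]
  have hmem : f ∈ LinearMap.range (bd G).dualMap := by
    rw [LinearMap.range_dualMap_eq_dualAnnihilator_ker, Submodule.mem_dualAnnihilator]
    intro p hp
    rw [hf]
    exact hy p hp
  obtain ⟨g, hg⟩ := hmem
  refine ⟨fun v => g (Pi.single v 1), ?_⟩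
  have hgv : ∀ w, g w = ∑ v, w v * g (Pi.single v 1) := fun w => by
    have hw : w = ∑ v, w v • (Pi.single v 1 : V → ZMod 2) := by
      funext u
      simp [Finset.sum_apply, Pi.single_apply]
    conv_lhs => rw [hw]
    rw [map_sum]
    simp only [map_smul, smul_eq_mul]
  funext e
  have h1 := bd_cobd_adj G (Pi.single e 1) (fun v => g (Pi.single v 1))
  rw [← hgv] at h1
  have h2 : g (bd G (Pi.single e 1)) = f (Pi.single e 1) := by rw [← hg]; rfl
  rw [h2, hf] at h1
  simpa [Pi.single_apply] using h1.symm

theorem cobd_edge (G : SimpleGraph V) [Fintype G.edgeSet] (c : V → ZMod 2) (u w : V)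
    (h : G.Adj u w) : cobd G c ⟨s(u, w), h⟩ = c u + c w := by
  have hne := h.ne
  simp only [cobd, LinearMap.coe_mk, AddHom.coe_mk, Sym2.mem_iff]
  rw [← Finset.sum_filter]
  have : (Finset.univ.filter fun v => v = u ∨ v = w) = {u, w} := by
    ext; simp
  rw [this, Finset.sum_pair hne]

theorem cobd_zero_const (G : SimpleGraph V) [Fintype G.edgeSet] (hG : G.Connected)
    (c : V → ZMod 2) (hc : cobd G c = 0) (u w : V) : c u = c w := by
  obtain ⟨p⟩ := hG.preconnected u w
  induction p with
  | nil => rfl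
  | cons h _ ih =>
    rw [← ih]
    have := cobd_edge G c _ _ h
    rw [hc] at this
    exact (CharTwo.add_eq_zero).1 this.symm

theorem cobd_one (G : SimpleGraph V) [Fintype G.edgeSet] (a : ZMod 2) :
    cobd G (fun _ => a) = 0 := by
  funext ⟨e, he⟩
  induction e with
  | _ u w =>
    rw [cobd_edge G _ u w he]
    exact CharTwo.add_self_eq_zero _

/-- Extension by zero off the support. -/
def extz {n : ℕ} {ℓ : Fin n → ZMod 2} (c : {i : Fin n // ℓ i = 1} → ZMod 2) :
    Fin n → ZMod 2 := fun i => if h : ℓ i = 1 then c ⟨i, h⟩ else 0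

theorem extz_const {n : ℕ} {ℓ : Fin n → ZMod 2} (a : ZMod 2) :
    extz (ℓ := ℓ) (fun _ => a) = a • ℓ := by
  funext i
  simp only [extz, Pi.smul_apply, smul_eq_mul]
  generalize ℓ i = b
  revert a b; decide

theorem gauss_sum {n : ℕ} {ℓ : Fin n → ZMod 2} (G : SimpleGraph {i : Fin n // ℓ i = 1})
    [Fintype G.edgeSet] (c : {i : Fin n // ℓ i = 1} → ZMod 2) :
    ∑ v, c v • gaussRow G v = Sum.elim (extz c) (cobd G c) := by
  funext j
  rw [Finset.sum_apply]
  cases j with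
  | inl i =>
    simp only [gaussRow, Pi.smul_apply, Sum.elim_inl, smul_eq_mul, extz, mul_ite, mul_one, mul_zero]
    split_ifs with h
    · rw [Finset.sum_eq_single ⟨i, h⟩]
      · simp
      · intro b _ hb
        rw [if_neg]
        rintro rfl
        exact hb rfl
      · simp
    · refine Finset.sum_eq_zero fun v _ => ?_
      rw [if_neg]
      rintro rfl
      exact h v.2
  | inr e =>
    simp only [gaussRow, Pi.smul_apply, Sum.elim_inr]
    have : c = ∑ v, c v • (fun w => if w = v then (1 : ZMod 2) else 0) := by
      funext w
      simp [Finset.sum_apply]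
    conv_rhs => rw [this]
    rw [map_sum, Finset.sum_apply]
    simp

theorem gauss_filter {n : ℕ} {ℓ : Fin n → ZMod 2} (G : SimpleGraph {i : Fin n // ℓ i = 1})
    [Fintype G.edgeSet] (c : {i : Fin n // ℓ i = 1} → ZMod 2) :
    ∑ v ∈ Finset.univ.filter (fun v => c v = 1), gaussRow G v
      = Sum.elim (extz c) (cobd G c) := by
  rw [← gauss_sum, Finset.sum_filter]
  refine Finset.sum_congr rfl fun v _ => ?_
  have : ∀ a : ZMod 2, a = 1 ∨ a = 0 := by decide
  rcases this (c v) with h | h <;> simp [h]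

theorem vecMul_deformedHX {n : ℕ} {rX : Type*} [Fintype rX]
    (HX : Matrix rX (Fin n) (ZMod 2))
    {ℓ : Fin n → ZMod 2} (G : SimpleGraph {i : Fin n // ℓ i = 1}) [Fintype G.edgeSet]
    (u : rX → ZMod 2) (d : {i : Fin n // ℓ i = 1} → ZMod 2) :
    (deformedHX HX G).vecMulLinear (Sum.elim u d)
      = Sum.elim (HX.vecMulLinear u + extz d) (cobd G d) := by
  have h := gauss_sum G d
  funext j
  have hj := congrFun h j
  rw [Finset.sum_apply] at hj
  simp only [Matrix.vecMulLinear_apply, Matrix.vecMul, dotProduct, Fintype.sum_sum_type,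
    deformedHX, Matrix.of_apply, Sum.elim_inl, Sum.elim_inr]
  simp only [Pi.smul_apply, smul_eq_mul] at hj
  rw [hj]
  cases j <;> simp [Matrix.vecMul, dotProduct]

theorem extz_dot {n : ℕ} {ℓ : Fin n → ZMod 2} (c : {i : Fin n // ℓ i = 1} → ZMod 2)
    (z : Fin n → ZMod 2) : ∑ i, z i * extz c i = ∑ v : {i : Fin n // ℓ i = 1}, z v.1 * c v := by
  have h : ∀ i, z i * extz c i = if h : ℓ i = 1 then z i * c ⟨i, h⟩ else 0 := by
    intro i; simp only [extz]; split <;> simp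
  simp only [h]
  rw [Finset.sum_dite]
  simp only [Finset.sum_const_zero, add_zero]
  refine Finset.sum_bij (fun x _ => ⟨x.1, (Finset.mem_filter.1 x.2).2⟩) ?_ ?_ ?_ ?_
  · simp
  · intro a _ b _ h
    exact Subtype.ext (congrArg (fun t => t.1) h)
  · intro b _
    exact ⟨⟨b.1, by simpa using b.2⟩, by simp, rfl⟩
  · simp

/-- **Cleaning lemma for X-type logicals.** Every `x'` with `H'_Z x' = 0`
can be cleaned by adding Gauss rows `Σ_{v : c v = 1} a_v` so that the resulting vector has
zero edge component, its `𝔽₂^n`-component `x` satisfies `H_Z x = 0`, and `x'` is a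
deformed `X`-stabilizer iff `x` lies in the row space of `H_X` plus the span of `ℓ`. -/
theorem deformed_X_logical_cleaning {n : ℕ} {rX rZ rN : Type*}
    [Fintype rX] [Fintype rZ] [Fintype rN]
    (HX : Matrix rX (Fin n) (ZMod 2)) (HZ : Matrix rZ (Fin n) (ZMod 2))
    (hCSS : HX * HZ.transpose = 0)
    (ℓ : Fin n → ZMod 2) (hℓZ : HZ.mulVec ℓ = 0)
    (hℓX : ℓ ∉ LinearMap.range HX.vecMulLinear)
    (G : SimpleGraph {i : Fin n // ℓ i = 1}) [Fintype G.edgeSet] (hG : G.Connected)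
    (γ : rZ → G.edgeSet → ZMod 2)
    (hγ : ∀ z : rZ, bd G (γ z) = fun v => HZ z v.1)
    (N : rN → G.edgeSet → ZMod 2)
    (hN0 : ∀ p : rN, bd G (N p) = 0)
    (hNli : LinearIndependent (ZMod 2) N)
    (hNspan : ∀ y : G.edgeSet → ZMod 2, bd G y = 0 →
      y ∈ Submodule.span (ZMod 2) (Set.range N)) :
    ∀ x' : (Fin n ⊕ G.edgeSet) → ZMod 2, (deformedHZ HZ G γ N).mulVec x' = 0 →
      ∃ c : {i : Fin n // ℓ i = 1} → ZMod 2,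
        (∀ e : G.edgeSet,
          (x' + ∑ v ∈ Finset.univ.filter (fun v => c v = 1), gaussRow G v) (Sum.inr e)
            = 0) ∧
        HZ.mulVec (fun i =>
          (x' + ∑ v ∈ Finset.univ.filter (fun v => c v = 1), gaussRow G v) (Sum.inl i))
            = 0 ∧
        (x' ∈ LinearMap.range (deformedHX HX G).vecMulLinear ↔
          (fun i =>
            (x' + ∑ v ∈ Finset.univ.filter (fun v => c v = 1), gaussRow G v) (Sum.inl i))
            ∈ LinearMap.range HX.vecMulLinear ⊔ Submodule.span (ZMod 2) {ℓ}) := by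
  intro x' hx'
  have hcyc : ∀ p, bd G p = 0 → ∑ e, p e * x' (Sum.inr e) = 0 := by
    intro p hp
    have := hNspan p hp
    induction this using Submodule.span_induction with
    | mem q hq =>
      obtain ⟨r, rfl⟩ := hq
      have := congrFun hx' (Sum.inr r)
      simpa [deformedHZ, Matrix.mulVec, dotProduct, Fintype.sum_sum_type] using this
    | zero => simp
    | add a b ha hb iha ihb =>
      have key : ∀ q ∈ Submodule.span (ZMod 2) (Set.range N), bd G q = 0 := by
        intro q hq
        have : Submodule.span (ZMod 2) (Set.range N) ≤ LinearMap.ker (bd G) := by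
          rw [Submodule.span_le]
          rintro _ ⟨r, rfl⟩
          exact hN0 r
        exact this hq
      simp only [Pi.add_apply, add_mul, Finset.sum_add_distrib]
      rw [iha (key a ha), ihb (key b hb), add_zero]
    | smul a b hb ih =>
      have key : bd G b = 0 := by
        have : Submodule.span (ZMod 2) (Set.range N) ≤ LinearMap.ker (bd G) := by
          rw [Submodule.span_le]
          rintro _ ⟨r, rfl⟩
          exact hN0 r
        exact this hb
      simp only [Pi.smul_apply, smul_eq_mul, mul_assoc, ← Finset.mul_sum]
      rw [ih key, mul_zero]
  obtain ⟨c, hc⟩ := exists_cobd G (fun e => x' (Sum.inr e)) hcyc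
  refine ⟨c, ?_, ?_, ?_⟩
  · intro e
    rw [gauss_filter, hc]
    exact CharTwo.add_self_eq_zero _
  · rw [gauss_filter]
    funext z
    have h1 := congrFun hx' (Sum.inl z)
    simp only [deformedHZ, Matrix.mulVec, dotProduct, Fintype.sum_sum_type, Matrix.of_apply,
      Sum.elim_inl, Sum.elim_inr, Pi.zero_apply] at h1
    have h2 := bd_cobd_adj G (γ z) c
    rw [hγ, hc] at h2
    have h3 := extz_dot c (HZ z)
    simp only [Matrix.mulVec, dotProduct, Pi.add_apply, Sum.elim_inl, mul_add,
      Finset.sum_add_distrib, Pi.zero_apply]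
    rw [h3, h2, h1]
  · rw [gauss_filter]
    simp only [LinearMap.mem_range, Submodule.mem_sup, Submodule.mem_span_singleton, Pi.add_apply,
      Sum.elim_inl]
    constructor
    · rintro ⟨ud, hud⟩
      obtain ⟨u, d, rfl⟩ : ∃ u d, ud = Sum.elim u d :=
        ⟨ud ∘ Sum.inl, ud ∘ Sum.inr, (Sum.elim_comp_inl_inr ud).symm⟩
      rw [vecMul_deformedHX] at hud
      obtain ⟨v0⟩ := hG.nonempty
      have hcd : cobd G (d + c) = 0 := by
        rw [map_add, hc, ← hud]
        funext e
        exact CharTwo.add_self_eq_zero _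
      have hconst : d + c = fun _ => (d + c) v0 := by
        funext v
        exact cobd_zero_const G hG _ hcd v v0
      refine ⟨_, ⟨u, rfl⟩, _, ⟨(d + c) v0, rfl⟩, ?_⟩
      rw [← extz_const, ← hconst, ← hud]
      funext i
      simp only [Pi.add_apply, Sum.elim_inl, extz]
      split <;> simp [add_assoc]
    · rintro ⟨_, ⟨u, rfl⟩, _, ⟨a, rfl⟩, h⟩
      refine ⟨Sum.elim u ((fun _ => a) + c), ?_⟩
      rw [vecMul_deformedHX, map_add, cobd_one, hc, zero_add]
      funext j
      cases j with
      | inr e => rfl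
      | inl i =>
        have hi := congrFun h i
        rw [← extz_const] at hi
        have h4 : extz ((fun _ => a) + c) i = extz (ℓ := ℓ) (fun _ => a) i + extz c i := by
          simp only [extz]; split <;> simp
        simp only [Sum.elim_inl, Pi.add_apply] at hi ⊢
        rw [h4, ← add_assoc, hi, add_assoc, CharTwo.add_self_eq_zero, add_zero]
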